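/- Let ν > 1/2 and λ > 0 and let g be the gamma kernel g(x) = (λ^{ν−1/2}/Γ(2ν−1)^{1/2}) x^{ν−1} e^{−λx/2}. The autocorrelation function ρ(h) = ∫₀^∞ g(t+h)g(t) dt / ∫₀^∞ g(t)² dt of the associated BSS process equals ρ(h) = (1/(2^{ν−3/2} Γ(ν−1/2))) · (λh/2)^{ν−1/2} K_{ν−1/2}(λh/2) for h > 0. -/

import Mathlib

open MeasureTheory Set Real

/-- The modified Bessel function of the third kind (Basset's integral
representation): `K_μ(x) = ∫₀^∞ exp(-x cosh t) cosh(μ t) dt` for `x > 0`. -/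
noncomputable def besselK (μ x : ℝ) : ℝ :=
  ∫ t in Ioi (0:ℝ), Real.exp (-x * Real.cosh t) * Real.cosh (μ * t)

/-!
Up to the normalisation of `g` and an affine change of variables, the autocorrelation is the
classical integral `∫₁^∞ (s² - 1) ^ (μ - 1/2) exp (-z s) ds` with `μ = ν - 1/2` and `z = lam h / 2`.
Substituting `w = s² - 1` turns `exp (-z s)` into `exp (-z √(1 + w)) / √(1 + w)`, which the closed
form of `K_{1/2}` represents as a mixture over `y ∈ ℝ` of exponentials in `w`. Integrating first
over `w` gives a Gamma integral for each `y`, and the remaining integral over `y` is `K_μ(z)`.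
-/

theorem integral_deriv_smul_comp_Ioi_of_strictMonoOn {E : Type*} [NormedAddCommGroup E]
    [NormedSpace ℝ E] {f f' : ℝ → ℝ} {a : ℝ} (hf : ContinuousOn f (Ici a))
    (hmono : StrictMonoOn f (Ici a)) (htop : Filter.Tendsto f Filter.atTop Filter.atTop)
    (hf' : ∀ x ∈ Ioi a, HasDerivWithinAt f (f' x) (Ioi a) x) (g : ℝ → E) :
    ∫ x in Ioi a, f' x • g (f x) = ∫ y in Ioi (f a), g y := by
  rw [← hf.image_Ioi_of_strictMonoOn hmono htop]
  exact (integral_image_eq_integral_deriv_smul_of_monotoneOn measurableSet_Ioi hf'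
    (hmono.monotoneOn.mono Ioi_subset_Ici_self) g).symm

theorem integral_comp_mul_add_Ioi {E : Type*} [NormedAddCommGroup E] [NormedSpace ℝ E]
    {c : ℝ} (hc : 0 < c) (b a : ℝ) (g : ℝ → E) :
    ∫ x in Ioi a, g (c * x + b) = c⁻¹ • ∫ y in Ioi (c * a + b), g y := by
  have hmono : StrictMono fun x : ℝ => c * x + b := fun x y hxy =>
    add_lt_add_left (mul_lt_mul_of_pos_left hxy hc) b
  have htop : Filter.Tendsto (fun x : ℝ => c * x + b) Filter.atTop Filter.atTop :=
    Filter.tendsto_atTop_add_const_right _ b (Filter.tendsto_id.const_mul_atTop hc)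
  have hderiv (x : ℝ) (_ : x ∈ Ioi a) :
      HasDerivWithinAt (fun x : ℝ => c * x + b) c (Ioi a) x := by
    simpa using (((hasDerivAt_id x).const_mul c).add_const b).hasDerivWithinAt
  rw [← integral_deriv_smul_comp_Ioi_of_strictMonoOn (by fun_prop) (hmono.strictMonoOn _) htop
    hderiv g, integral_smul, inv_smul_smul₀ hc.ne']

theorem sq_div_four_le_cosh (t : ℝ) : t ^ 2 / 4 ≤ cosh t := by
  have h := quadratic_le_exp_of_nonneg (abs_nonneg t)
  rw [sq_abs] at h
  rw [← cosh_abs, cosh_eq]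
  linarith [exp_pos (-|t|), abs_nonneg t]

theorem integrable_exp_mul_mul_exp_neg_mul_cosh (μ : ℝ) {x : ℝ} (hx : 0 < x) :
    Integrable fun t => exp (μ * t) * exp (-x * cosh t) := by
  have hgauss := (integrable_exp_neg_mul_sq (b := x / 8) (by positivity)).const_mul
    (exp (2 * μ ^ 2 / x))
  refine hgauss.mono' (by fun_prop) (ae_of_all _ fun t => ?_)
  have hsq : 2 * μ ^ 2 / x + x / 8 * t ^ 2 - μ * t = (4 * μ - x * t) ^ 2 / (8 * x) := by
    field_simp
    ring
  have hamgm : μ * t ≤ 2 * μ ^ 2 / x + x / 8 * t ^ 2 :=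
    sub_nonneg.1 (hsq ▸ by positivity)
  rw [norm_of_nonneg (by positivity), ← exp_add, ← exp_add, exp_le_exp]
  linarith [mul_le_mul_of_nonneg_left (sq_div_four_le_cosh t) hx.le]

theorem besselK_neg (μ x : ℝ) : besselK (-μ) x = besselK μ x := by
  simp only [besselK, neg_mul, cosh_neg]

theorem integral_exp_mul_mul_exp_neg_mul_cosh (μ : ℝ) {x : ℝ} (hx : 0 < x) :
    ∫ t, exp (μ * t) * exp (-x * cosh t) = 2 * besselK μ x := by
  have hint := integrable_exp_mul_mul_exp_neg_mul_cosh μ hx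
  have hreflect : ∫ t, exp (-(μ * t)) * exp (-x * cosh t) =
      ∫ t, exp (μ * t) * exp (-x * cosh t) := by
    simpa only [mul_neg, cosh_neg] using
      integral_neg_eq_self (fun t => exp (μ * t) * exp (-x * cosh t)) volume
  have hint' : Integrable fun t => exp (-(μ * t)) * exp (-x * cosh t) := by
    simpa only [neg_mul] using integrable_exp_mul_mul_exp_neg_mul_cosh (-μ) hx
  calc ∫ t, exp (μ * t) * exp (-x * cosh t)
      = (∫ t, (exp (μ * t) * exp (-x * cosh t) + exp (-(μ * t)) * exp (-x * cosh t))) / 2 := by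
        rw [integral_add hint hint', hreflect, add_self_div_two]
    _ = ∫ t, exp (-x * cosh t) * cosh (μ * t) := by
        rw [← integral_div]
        exact integral_congr_ae (ae_of_all _ fun t => by simp only [cosh_eq (μ * t)]; ring)
    _ = ∫ t, exp (-x * cosh |t|) * cosh (μ * |t|) := by
        refine integral_congr_ae (ae_of_all _ fun t => ?_)
        rcases abs_cases t with ⟨h, -⟩ | ⟨h, -⟩ <;> simp only [h, mul_neg, cosh_neg]
    _ = 2 * besselK μ x := integral_comp_abs (f := fun t => exp (-x * cosh t) * cosh (μ * t))

theorem integral_exp_mul_mul_exp_neg_scaled_cosh (μ : ℝ) {x c : ℝ} (hx : 0 < x) (hc : 0 < c) :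
    ∫ t, exp (μ * t) * exp (-(x / 2 * (c * exp t + c⁻¹ * exp (-t)))) =
      c ^ (-μ) * (2 * besselK μ x) := by
  rw [← integral_sub_right_eq_self _ (log c), ← integral_exp_mul_mul_exp_neg_mul_cosh μ hx,
    ← integral_const_mul]
  refine integral_congr_ae (ae_of_all _ fun t => ?_)
  have hμ : exp (μ * (t - log c)) = c ^ (-μ) * exp (μ * t) := by
    rw [rpow_def_of_pos hc, ← exp_add]
    congr 1
    ring
  have hcosh : x / 2 * (c * exp (t - log c) + c⁻¹ * exp (-(t - log c))) = x * cosh t := by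
    rw [neg_sub', exp_sub, sub_neg_eq_add, exp_add, exp_log hc, cosh_eq]
    field_simp
  simp only [hμ, hcosh, neg_mul, mul_assoc]

theorem besselK_one_half (x : ℝ) :
    besselK (1 / 2) x = √(π / (2 * x)) * exp (-x) := by
  have hdouble : besselK (1 / 2) x =
      2 * ∫ s in Ioi (0 : ℝ), exp (-x * cosh (2 * s)) * cosh s := by
    have := integral_comp_mul_left_Ioi'
      (fun t => exp (-x * cosh t) * cosh (1 / 2 * t)) 0 (two_pos (α := ℝ))
    rw [mul_zero] at this
    simpa [besselK] using this.symm
  have hsinh : ∫ s in Ioi (0 : ℝ), cosh s * exp (-(2 * x) * sinh s ^ 2) =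
      ∫ w in Ioi (0 : ℝ), exp (-(2 * x) * w ^ 2) := by
    simpa only [sinh_zero, smul_eq_mul] using integral_deriv_smul_comp_Ioi_of_strictMonoOn
      continuous_sinh.continuousOn (sinh_strictMono.strictMonoOn (Ici 0))
      sinhOrderIso.tendsto_atTop (fun s _ => (hasDerivAt_sinh s).hasDerivWithinAt)
      (fun w => exp (-(2 * x) * w ^ 2))
  calc besselK (1 / 2) x
      = 2 * ∫ s in Ioi (0 : ℝ), exp (-x) * (cosh s * exp (-(2 * x) * sinh s ^ 2)) := by
        rw [hdouble]
        congr 2 with s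
        rw [cosh_two_mul, cosh_sq, mul_left_comm, ← exp_add, mul_comm]
        ring_nf
    _ = √(π / (2 * x)) * exp (-x) := by
        rw [integral_const_mul, hsinh, integral_gaussian_Ioi]
        ring

/-- The joint integrand that mixes exponentials `exp (-(z / 2) * exp y * w)` over `y`. Up to
constants, for fixed `y` it is a Gamma density in `w`, and for fixed `w` it is the integrand of
`K_{1/2}(z √(1 + w))` in the variable `y`, translated by `log √(1 + w)`. -/
noncomputable def besselMixture (μ z w y : ℝ) : ℝ :=
  w ^ (μ - 1 / 2) * exp (-(z / 2 * exp y * w)) * (exp (1 / 2 * y) * exp (-z * cosh y))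

theorem besselMixture_nonneg (μ z y : ℝ) {w : ℝ} (hw : 0 ≤ w) : 0 ≤ besselMixture μ z w y := by
  unfold besselMixture
  positivity

theorem integral_besselMixture_left {μ : ℝ} (hμ : -1 / 2 < μ) {z : ℝ} (hz : 0 < z) (y : ℝ) :
    ∫ w in Ioi (0 : ℝ), besselMixture μ z w y =
      (2 / z) ^ (μ + 1 / 2) * Gamma (μ + 1 / 2) * (exp (-μ * y) * exp (-z * cosh y)) := by
  have hexp : (1 / (z / 2 * exp y)) ^ (μ + 1 / 2) * exp (1 / 2 * y) =
      (2 / z) ^ (μ + 1 / 2) * exp (-μ * y) := by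
    rw [show 1 / (z / 2 * exp y) = 2 / z * exp (-y) by rw [exp_neg]; field_simp,
      mul_rpow (by positivity) (by positivity), ← exp_mul, mul_assoc, ← exp_add]
    ring_nf
  have hgamma := integral_rpow_mul_exp_neg_mul_Ioi (a := μ + 1 / 2) (r := z / 2 * exp y)
    (by linarith) (by positivity)
  rw [show μ + 1 / 2 - 1 = μ - 1 / 2 by ring] at hgamma
  simp only [besselMixture]
  rw [integral_mul_const, hgamma]
  linear_combination Gamma (μ + 1 / 2) * exp (-z * cosh y) * hexp

theorem integral_besselMixture_right (μ : ℝ) {z w : ℝ} (hz : 0 < z) (hw : 0 ≤ w) :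
    ∫ y, besselMixture μ z w y =
      √(2 * π / z) * (w ^ (μ - 1 / 2) * (exp (-z * √(1 + w)) / √(1 + w))) := by
  set r := √(1 + w)
  have hr0 : 0 < r := by positivity
  have hr2 : r ^ 2 = 1 + w := sq_sqrt (by positivity)
  have hsplit (y : ℝ) : besselMixture μ z w y = w ^ (μ - 1 / 2) *
      (exp (1 / 2 * y) * exp (-(z * r / 2 * (r * exp y + r⁻¹ * exp (-y))))) := by
    have : -(z / 2 * exp y * w) + -z * cosh y = -(z * r / 2 * (r * exp y + r⁻¹ * exp (-y))) := by
      rw [cosh_eq]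
      field_simp
      rw [hr2]
      ring
    rw [besselMixture, ← this, exp_add]
    ring
  have hsqrt : r ^ (-(1 / 2) : ℝ) * (2 * √(π / (2 * (z * r)))) = √(2 * π / z) / r := by
    rw [show π / (2 * (z * r)) = 2 * π / z / (2 ^ 2 * r) by field_simp,
      sqrt_div (by positivity), sqrt_mul (by positivity), sqrt_sq (by norm_num), rpow_neg hr0.le,
      ← sqrt_eq_rpow]
    field_simp
    rw [sq_sqrt hr0.le]
  simp only [hsplit]
  rw [integral_const_mul, integral_exp_mul_mul_exp_neg_scaled_cosh _ (by positivity) hr0,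
    besselK_one_half, neg_mul]
  linear_combination w ^ (μ - 1 / 2) * exp (-(z * r)) * hsqrt

theorem integrable_besselMixture {μ : ℝ} (hμ : -1 / 2 < μ) {z : ℝ} (hz : 0 < z) :
    Integrable (Function.uncurry (besselMixture μ z))
      ((volume.restrict (Ioi 0)).prod volume) := by
  have hmeas : Measurable (Function.uncurry (besselMixture μ z)) := by
    unfold Function.uncurry besselMixture
    fun_prop
  refine (integrable_prod_iff' hmeas.aestronglyMeasurable).2 ⟨ae_of_all _ fun y => ?_, ?_⟩
  · have := integrableOn_rpow_mul_exp_neg_mul_rpow (p := 1) (s := μ - 1 / 2) (b := z / 2 * exp y)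
      (by linarith) one_pos (by positivity)
    simp only [rpow_one, neg_mul] at this
    exact this.mul_const (exp (1 / 2 * y) * exp (-z * cosh y))
  · have hnorm (y : ℝ) : ∫ w in Ioi (0 : ℝ), ‖besselMixture μ z w y‖ =
        (2 / z) ^ (μ + 1 / 2) * Gamma (μ + 1 / 2) * (exp (-μ * y) * exp (-z * cosh y)) := by
      rw [← integral_besselMixture_left hμ hz y]
      exact setIntegral_congr_fun measurableSet_Ioi fun w hw =>
        norm_of_nonneg (besselMixture_nonneg μ z y (mem_Ioi.1 hw).le)
    simp only [Function.uncurry_apply_pair, hnorm]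
    exact (integrable_exp_mul_mul_exp_neg_mul_cosh (-μ) hz).const_mul _

theorem integral_rpow_mul_exp_neg_mul_sqrt_div_sqrt {μ : ℝ} (hμ : -1 / 2 < μ) {z : ℝ}
    (hz : 0 < z) :
    ∫ w in Ioi (0 : ℝ), w ^ (μ - 1 / 2) * (exp (-z * √(1 + w)) / √(1 + w)) =
      2 * (Gamma (μ + 1 / 2) / √π * (2 / z) ^ μ * besselK μ z) := by
  have hfubini : √(2 * π / z) *
        ∫ w in Ioi (0 : ℝ), w ^ (μ - 1 / 2) * (exp (-z * √(1 + w)) / √(1 + w)) =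
      (2 / z) ^ (μ + 1 / 2) * Gamma (μ + 1 / 2) * (2 * besselK μ z) := by
    calc _ = ∫ w in Ioi (0 : ℝ), ∫ y, besselMixture μ z w y := by
          rw [← integral_const_mul]
          exact setIntegral_congr_fun measurableSet_Ioi fun w hw =>
            (integral_besselMixture_right μ hz (mem_Ioi.1 hw).le).symm
      _ = ∫ y, ∫ w in Ioi (0 : ℝ), besselMixture μ z w y :=
          integral_integral_swap (integrable_besselMixture hμ hz)
      _ = _ := by
          simp only [integral_besselMixture_left hμ hz]
          rw [integral_const_mul, integral_exp_mul_mul_exp_neg_mul_cosh _ hz, besselK_neg]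
  have hsqrt : √(2 * π / z) = √(2 / z) * √π := by
    rw [← sqrt_mul (by positivity)]
    ring_nf
  rw [hsqrt, rpow_add (by positivity), ← sqrt_eq_rpow] at hfubini
  have : 0 < √(2 / z) := by positivity
  field_simp at hfubini ⊢
  linear_combination hfubini

theorem integral_sq_sub_one_rpow_mul_exp_neg {μ : ℝ} (hμ : -1 / 2 < μ) {z : ℝ} (hz : 0 < z) :
    ∫ s in Ioi (1 : ℝ), (s ^ 2 - 1) ^ (μ - 1 / 2) * exp (-z * s) =
      Gamma (μ + 1 / 2) / √π * (2 / z) ^ μ * besselK μ z := by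
  have hmono : StrictMonoOn (fun s : ℝ => s ^ 2 - 1) (Ici 1) := fun a ha b _ hab =>
    sub_lt_sub_right (pow_lt_pow_left₀ hab (zero_le_one.trans ha) two_ne_zero) 1
  have htop : Filter.Tendsto (fun s : ℝ => s ^ 2 - 1) Filter.atTop Filter.atTop :=
    Filter.tendsto_atTop_add_const_right _ (-1) (Filter.tendsto_pow_atTop two_ne_zero)
  have hderiv (s : ℝ) (_ : s ∈ Ioi (1 : ℝ)) :
      HasDerivWithinAt (fun s : ℝ => s ^ 2 - 1) (2 * s) (Ioi 1) s := by
    simpa using ((hasDerivAt_pow 2 s).sub_const 1).hasDerivWithinAt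
  have hsubst := integral_deriv_smul_comp_Ioi_of_strictMonoOn (by fun_prop) hmono htop hderiv
    fun w => w ^ (μ - 1 / 2) * (exp (-z * √(1 + w)) / √(1 + w))
  rw [one_pow, sub_self, integral_rpow_mul_exp_neg_mul_sqrt_div_sqrt hμ hz] at hsubst
  rw [← mul_right_inj' (two_ne_zero (α := ℝ)), ← hsubst, ← integral_const_mul]
  refine setIntegral_congr_fun measurableSet_Ioi fun s hs => ?_
  have hs0 : 0 < s := one_pos.trans hs
  simp only [add_sub_cancel, sqrt_sq hs0.le, smul_eq_mul]
  field_simp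

theorem integral_add_mul_self_rpow_mul_exp_neg {μ : ℝ} (hμ : -1 / 2 < μ) {lam h : ℝ}
    (hlam : 0 < lam) (hh : 0 < h) :
    ∫ t in Ioi (0 : ℝ), ((t + h) * t) ^ (μ - 1 / 2) * exp (-(lam * (t + h + t) / 2)) =
      Gamma (μ + 1 / 2) / √π * (h / lam) ^ μ * besselK μ (lam * h / 2) := by
  have hscale : ∫ t in Ioi (0 : ℝ), ((t + h) * t) ^ (μ - 1 / 2) * exp (-(lam * (t + h + t) / 2)) =
      ((h / 2) ^ 2) ^ (μ - 1 / 2) * ∫ t in Ioi (0 : ℝ),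
        ((2 / h * t + 1) ^ 2 - 1) ^ (μ - 1 / 2) * exp (-(lam * h / 2) * (2 / h * t + 1)) := by
    rw [← integral_const_mul]
    refine setIntegral_congr_fun measurableSet_Ioi fun t ht => ?_
    have ht0 : 0 < t := ht
    have hsq : (2 / h * t + 1) ^ 2 - 1 = (t + h) * t / (h / 2) ^ 2 := by
      field_simp
      ring
    have hexp : -(lam * h / 2) * (2 / h * t + 1) = -(lam * (t + h + t) / 2) := by
      field_simp
      ring
    simp only [hsq, hexp]
    rw [← mul_assoc, ← mul_rpow (by positivity) (by positivity), mul_div_cancel₀ _ (by positivity)]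
  have hpow : ((h / 2) ^ 2) ^ (μ - 1 / 2) * (h / 2) * (2 / (lam * h / 2)) ^ μ = (h / lam) ^ μ := by
    have hroot : ((h / 2) ^ 2) ^ (1 / 2 : ℝ) = h / 2 := by
      rw [← sqrt_eq_rpow, sqrt_sq (by positivity)]
    rw [rpow_sub (by positivity), hroot, div_mul_cancel₀ _ (by positivity),
      ← mul_rpow (by positivity) (by positivity)]
    congr 1
    field_simp
  rw [hscale, integral_comp_mul_add_Ioi (by positivity) 1 0
    (fun s => (s ^ 2 - 1) ^ (μ - 1 / 2) * exp (-(lam * h / 2) * s)), mul_zero, zero_add,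
    integral_sq_sub_one_rpow_mul_exp_neg hμ (by positivity), smul_eq_mul, inv_div, ← hpow]
  ring

/-- The gamma kernel `g` of shape `ν` and rate `lam`, normalised so that `g ^ 2` is the
`Gamma(2 * ν - 1, lam)` density on `(0, ∞)`. -/
noncomputable def gammaKernel (ν lam x : ℝ) : ℝ :=
  lam ^ (ν - 1 / 2) / (Real.Gamma (2 * ν - 1)) ^ ((1:ℝ) / 2) *
    x ^ (ν - 1) * Real.exp (-lam * x / 2)

theorem gammaKernel_mul_gammaKernel {ν lam x y : ℝ} (hν : 1 / 2 < ν) (hlam : 0 ≤ lam)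
    (hx : 0 ≤ x) (hy : 0 ≤ y) :
    gammaKernel ν lam x * gammaKernel ν lam y =
      lam ^ (2 * ν - 1) / Gamma (2 * ν - 1) * ((x * y) ^ (ν - 1) * exp (-(lam * (x + y) / 2))) := by
  have hcoeff : lam ^ (2 * ν - 1) / Gamma (2 * ν - 1) =
      (lam ^ (ν - 1 / 2) / Gamma (2 * ν - 1) ^ (1 / 2 : ℝ)) ^ 2 := by
    rw [div_pow, ← rpow_mul_natCast hlam, ← sqrt_eq_rpow,
      sq_sqrt (Gamma_pos_of_pos (by linarith)).le]
    push_cast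
    ring_nf
  have hexp : exp (-(lam * (x + y) / 2)) = exp (-lam * x / 2) * exp (-lam * y / 2) := by
    rw [← exp_add]
    ring_nf
  rw [hcoeff, mul_rpow hx hy, hexp, gammaKernel, gammaKernel]
  ring

theorem integral_gammaKernel_sq {ν lam : ℝ} (hν : 1 / 2 < ν) (hlam : 0 < lam) :
    ∫ t in Ioi (0 : ℝ), gammaKernel ν lam t ^ 2 = 1 := by
  have hdensity (t : ℝ) (ht : t ∈ Ioi (0 : ℝ)) : gammaKernel ν lam t ^ 2 =
      lam ^ (2 * ν - 1) / Gamma (2 * ν - 1) * (t ^ (2 * ν - 1 - 1) * exp (-(lam * t))) := by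
    have ht0 : 0 < t := ht
    rw [sq, gammaKernel_mul_gammaKernel hν hlam.le ht0.le ht0.le, mul_rpow ht0.le ht0.le,
      ← rpow_add ht0]
    ring_nf
  have hGamma : Gamma (2 * ν - 1) ≠ 0 := (Gamma_pos_of_pos (by linarith)).ne'
  rw [setIntegral_congr_fun measurableSet_Ioi hdensity, integral_const_mul,
    integral_rpow_mul_exp_neg_mul_Ioi (by linarith) hlam, one_div, inv_rpow hlam.le]
  have := (rpow_pos_of_pos hlam (2 * ν - 1)).ne'
  field_simp

theorem integral_gammaKernel_add_mul_gammaKernel {ν lam h : ℝ} (hν : 1 / 2 < ν) (hlam : 0 < lam)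
    (hh : 0 < h) :
    ∫ t in Ioi (0 : ℝ), gammaKernel ν lam (t + h) * gammaKernel ν lam t =
      lam ^ (2 * ν - 1) / Gamma (2 * ν - 1) *
        (Gamma ν / √π * (h / lam) ^ (ν - 1 / 2) * besselK (ν - 1 / 2) (lam * h / 2)) := by
  have hbessel := integral_add_mul_self_rpow_mul_exp_neg (μ := ν - 1 / 2) (by linarith) hlam hh
  rw [sub_add_cancel, show ν - 1 / 2 - 1 / 2 = ν - 1 by ring] at hbessel
  rw [← hbessel, ← integral_const_mul]
  exact setIntegral_congr_fun measurableSet_Ioi fun t (ht : 0 < t) =>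
    gammaKernel_mul_gammaKernel hν hlam.le (by positivity) ht.le

theorem Gamma_add_half_div_Gamma_two_mul {μ : ℝ} (hμ : 0 < μ) :
    Gamma (μ + 1 / 2) / (√π * Gamma (2 * μ)) = 2 ^ (1 - 2 * μ) / Gamma μ := by
  rw [div_eq_div_iff (by positivity) (by positivity)]
  linear_combination Gamma_mul_Gamma_add_half μ

theorem rpow_two_mul_mul_div_rpow_mul_two_rpow {a b : ℝ} (ha : 0 < a) (hb : 0 ≤ b) (μ : ℝ) :
    a ^ (2 * μ) * (b / a) ^ μ * 2 ^ (1 - 2 * μ) = (a * b / 2) ^ μ / 2 ^ (μ - 1) := by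
  rw [rpow_mul ha.le, ← mul_rpow (by positivity) (by positivity),
    div_rpow (by positivity) (by positivity), div_div, ← rpow_add two_pos,
    show 1 - 2 * μ = -(μ + (μ - 1)) by ring, rpow_neg two_pos.le, rpow_two, ← div_eq_mul_inv]
  congr 2
  field_simp

theorem gamma_kernel_BSS_autocorrelation (ν lam h : ℝ) (hν : 1 / 2 < ν)
    (hlam : 0 < lam) (hh : 0 < h) :
    let g : ℝ → ℝ := fun x =>
      lam ^ (ν - 1 / 2) / (Real.Gamma (2 * ν - 1)) ^ ((1:ℝ) / 2) *
        x ^ (ν - 1) * Real.exp (-lam * x / 2)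
    (∫ t in Ioi (0:ℝ), g (t + h) * g t) / (∫ t in Ioi (0:ℝ), (g t) ^ 2)
      = 1 / ((2:ℝ) ^ (ν - 3 / 2) * Real.Gamma (ν - 1 / 2)) *
          (lam * h / 2) ^ (ν - 1 / 2) * besselK (ν - 1 / 2) (lam * h / 2) := by
  change (∫ t in Ioi (0 : ℝ), gammaKernel ν lam (t + h) * gammaKernel ν lam t) /
    (∫ t in Ioi (0 : ℝ), gammaKernel ν lam t ^ 2) = _
  rw [integral_gammaKernel_sq hν hlam, div_one,
    integral_gammaKernel_add_mul_gammaKernel hν hlam hh]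
  have hdup := Gamma_add_half_div_Gamma_two_mul (μ := ν - 1 / 2) (by linarith)
  have hpow := rpow_two_mul_mul_div_rpow_mul_two_rpow hlam hh.le (ν - 1 / 2)
  rw [show 2 * (ν - 1 / 2) = 2 * ν - 1 by ring] at hdup hpow
  rw [sub_add_cancel] at hdup
  rw [show ν - 1 / 2 - 1 = ν - 3 / 2 by ring] at hpow
  set K := besselK (ν - 1 / 2) (lam * h / 2)
  calc _ = lam ^ (2 * ν - 1) * (h / lam) ^ (ν - 1 / 2) *
        (Gamma ν / (√π * Gamma (2 * ν - 1))) * K := by ring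
    _ = lam ^ (2 * ν - 1) * (h / lam) ^ (ν - 1 / 2) * 2 ^ (1 - (2 * ν - 1)) /
        Gamma (ν - 1 / 2) * K := by rw [hdup]; ring
    _ = _ := by rw [hpow]; ring
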